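/- Let n ≥ 2 and let u be a C³ function on an open neighborhood of the closed unit ball B̄₁ ⊂ ℝⁿ with D²u positive definite everywhere and u = 0 on ∂B₁. Fix k ≠ l and let ∂ denote the angular derivative ξ_k ∂/∂ξ_l − ξ_l ∂/∂ξ_k. Define K : B₁ → (0,∞) by det D²u(ξ) = K(ξ)⁻¹·(1−|ξ|²)^{−(n+2)/2}. If C₁ > 0 is a constant with ∂(log K)(ξ) ≤ nC₁ for all ξ ∈ B₁, then ∂u(ξ) ≤ −C₁·u(ξ) for all ξ ∈ B̄₁. In particular, since u < 0 in B₁ by convexity, the angular derivative ∂u is bounded above in terms of C₁ and sup|u|. -/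

import Mathlib

open Real Filter Set

noncomputable section

/-- Partial derivative of `u` in the `i`-th coordinate direction. -/
def pd (n : ℕ) (u : (Fin n → ℝ) → ℝ) (i : Fin n) (x : Fin n → ℝ) : ℝ :=
  fderiv ℝ u x (Pi.single i 1)

/-- Hessian matrix of `u`. -/
def hess (n : ℕ) (u : (Fin n → ℝ) → ℝ) (x : Fin n → ℝ) : Matrix (Fin n) (Fin n) ℝ :=
  Matrix.of fun i j => pd n (pd n u j) i x

/-- Squared Euclidean norm of the gradient. -/
def gradSq (n : ℕ) (u : (Fin n → ℝ) → ℝ) (x : Fin n → ℝ) : ℝ :=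
  ∑ i, (pd n u i x) ^ 2

/-- `w = √(1 - |Du|²)`. -/
def wF (n : ℕ) (u : (Fin n → ℝ) → ℝ) (x : Fin n → ℝ) : ℝ :=
  Real.sqrt (1 - gradSq n u x)

/-- `γ^{ik} = δ_{ik} + u_i u_k / (w (1 + w))`. -/
def gammaM (n : ℕ) (u : (Fin n → ℝ) → ℝ) (x : Fin n → ℝ) : Matrix (Fin n) (Fin n) ℝ :=
  Matrix.of fun i k =>
    (if i = k then (1 : ℝ) else 0) + pd n u i x * pd n u k x / (wF n u x * (1 + wF n u x))

/-- The principal-curvature matrix `A[u] = (1/w) γ (D²u) γ`. -/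
def curvM (n : ℕ) (u : (Fin n → ℝ) → ℝ) (x : Fin n → ℝ) : Matrix (Fin n) (Fin n) ℝ :=
  (wF n u x)⁻¹ • (gammaM n u x * hess n u x * gammaM n u x)

/-- The positive cone `Γₙ⁺`. -/
def GammaPlus (n : ℕ) : Set (Fin n → ℝ) := {κ | ∀ i, 0 < κ i}

/-- `F(A) = 1 / f_*(κ₁⁻¹, …, κₙ⁻¹)` where `κᵢ` are the eigenvalues of `A`. -/
def Fc (n : ℕ) (fstar : (Fin n → ℝ) → ℝ) (A : Matrix (Fin n) (Fin n) ℝ) : ℝ :=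
  if h : A.IsHermitian then 1 / fstar (fun i => (h.eigenvalues i)⁻¹) else 0

/-- `F_*(A) = f_*(eigenvalues of A)`. -/
def FsM (n : ℕ) (fstar : (Fin n → ℝ) → ℝ) (A : Matrix (Fin n) (Fin n) ℝ) : ℝ :=
  if h : A.IsHermitian then fstar h.eigenvalues else 0

/-- `w* = √(1 - |ξ|²)`. -/
def wS (n : ℕ) (ξ : Fin n → ℝ) : ℝ := Real.sqrt (1 - ∑ i, (ξ i) ^ 2)

/-- `γ*_{ik} = δ_{ik} - ξᵢ ξ_k / (1 + w*)`. -/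
def gammaS (n : ℕ) (ξ : Fin n → ℝ) : Matrix (Fin n) (Fin n) ℝ :=
  Matrix.of fun i k => (if i = k then (1 : ℝ) else 0) - ξ i * ξ k / (1 + wS n ξ)

/-- The dual curvature matrix `A*[u*] = w* γ* (D²u*) γ*`. -/
def dualCurvM (n : ℕ) (ustar : (Fin n → ℝ) → ℝ) (ξ : Fin n → ℝ) :
    Matrix (Fin n) (Fin n) ℝ :=
  wS n ξ • (gammaS n ξ * hess n ustar ξ * gammaS n ξ)

/-- Open Euclidean ball of radius `r` about the origin. -/
def ballE (n : ℕ) (r : ℝ) : Set (Fin n → ℝ) := {ξ | ∑ i, (ξ i) ^ 2 < r ^ 2}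

/-- Closed Euclidean ball of radius `r` about the origin. -/
def cballE (n : ℕ) (r : ℝ) : Set (Fin n → ℝ) := {ξ | ∑ i, (ξ i) ^ 2 ≤ r ^ 2}

/-- Euclidean sphere of radius `r` about the origin. -/
def sphereE (n : ℕ) (r : ℝ) : Set (Fin n → ℝ) := {ξ | ∑ i, (ξ i) ^ 2 = r ^ 2}

/-- The full structural conditions on the curvature function `f_*`. -/
def FullStructural (n : ℕ) (fstar : (Fin n → ℝ) → ℝ) : Prop :=
  ContDiffOn ℝ (⊤ : ℕ∞) fstar (GammaPlus n) ∧
  ConcaveOn ℝ (GammaPlus n) fstar ∧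
  (∀ κ ∈ GammaPlus n, 0 < fstar κ) ∧
  (∀ κ ∈ frontier (GammaPlus n), fstar κ = 0) ∧
  (∀ κ ∈ GammaPlus n, ∀ i, 0 < fderiv ℝ fstar κ (Pi.single i 1)) ∧
  (∀ c : ℝ, 0 < c → ∀ κ ∈ GammaPlus n, fstar (c • κ) = c * fstar κ) ∧
  (∃ ε₀ > (0 : ℝ), ∀ κ ∈ GammaPlus n,
    ε₀ * fstar κ * (∑ i, κ i) ≤ ∑ i, fderiv ℝ fstar κ (Pi.single i 1) * (κ i) ^ 2) ∧
  (∀ C > (0 : ℝ), ∀ E : Set (Fin n → ℝ), IsCompact E → E ⊆ GammaPlus n →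
    ∀ i₀ : Fin n, ∃ R > (0 : ℝ), ∀ κ ∈ E, C < fstar (Function.update κ i₀ (κ i₀ + R))) ∧
  fstar (fun _ => 1) = 1

/-- Conditions A on the initial hypersurface. -/
def ConditionsA (n : ℕ) (u₀ : (Fin n → ℝ) → ℝ) (C₀ C₁ : ℝ) : Prop :=
  ContDiff ℝ (⊤ : ℕ∞) u₀ ∧
  (∀ x, gradSq n u₀ x < 1) ∧
  (∀ x, (hess n u₀ x).PosDef) ∧
  (∀ k : ℕ, ∀ i j : Fin n, ∃ M : ℝ, ∀ x,
      ‖iteratedFDeriv ℝ k (fun y => curvM n u₀ y i j) x‖ ≤ M) ∧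
  (∀ x, Real.sqrt ((∑ i, (x i) ^ 2) + C₀) < u₀ x ∧ u₀ x < Real.sqrt ((∑ i, (x i) ^ 2) + C₁))


/-!
Let `L f x = Df(x)(A x)` be the derivative along the rotation field of a skew-symmetric matrix `A`,
and write `H = D²u`. Commuting two partial derivatives past `L` gives
`D²(L u) = L H + Aᵀ H + H A`, so Jacobi's formula and `tr A = 0` turn the trace against `H⁻¹` into
`tr (H⁻¹ D²(L u)) = L (log det H)`. The weight `(1 - |ξ|²)^p` is constant on spheres, hence
`L (log det H) = -L (log K) ≥ -n C₁`. For `C > C₁` the function `v = L u + C u` therefore has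
`tr (H⁻¹ D²v) ≥ n (C - C₁) > 0` in the open ball and no interior maximum there, while `v = 0` on the
sphere because `L` is tangential. So `v ≤ 0`, and letting `C` decrease to `C₁` gives the bound.
-/

open scoped Matrix

section Calculus

variable {E : Type*} [NormedAddCommGroup E]

section Determinant

variable {𝕜 ι : Type*} [NontriviallyNormedField 𝕜] [NormedSpace 𝕜 E] [Fintype ι] [DecidableEq ι]
  {M : E → Matrix ι ι 𝕜} {x : E}

theorem differentiableAt_matrix_det (hM : ∀ i j, DifferentiableAt 𝕜 (fun y => M y i j) x) :
    DifferentiableAt 𝕜 (fun y => (M y).det) x := by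
  simp only [Matrix.det_apply]
  fun_prop

theorem fderiv_matrix_det (hM : ∀ i j, DifferentiableAt 𝕜 (fun y => M y i j) x) (v : E) :
    fderiv 𝕜 (fun y => (M y).det) x v =
      ((M x).adjugate * Matrix.of fun i j => fderiv 𝕜 (fun y => M y i j) x v).trace := by
  let detRows : ContinuousMultilinearMap 𝕜 (fun _ : ι => ι → 𝕜) 𝕜 :=
    { (Matrix.detRowAlternating (R := 𝕜) (n := ι)).toMultilinearMap with
      cont := Continuous.matrix_det continuous_id }
  have hrow (i : ι) : HasFDerivAt (fun y => M y i)
      (ContinuousLinearMap.pi fun j => fderiv 𝕜 (fun y => M y i j) x) x :=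
    hasFDerivAt_pi.2 fun j => (hM i j).hasFDerivAt
  have hdet : HasFDerivAt (fun y => (M y).det) _ x := HasFDerivAt.multilinear_comp detRows hrow
  have hupdate (i : ι) (r : ι → 𝕜) :
      ((M x).updateRow i r).det = ∑ j, (M x).adjugate j i * r j := by
    rw [← Matrix.cramer_transpose_apply, Matrix.cramer_eq_adjugate_mulVec,
      ← Matrix.adjugate_transpose]
    rfl
  rw [hdet.fderiv, sum_apply, Matrix.trace_mul_comm]
  refine Finset.sum_congr rfl fun i _ => (hupdate i _).trans ?_
  exact Finset.sum_congr rfl fun j _ => mul_comm _ _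

end Determinant

theorem deriv_deriv_nonpos_of_isLocalMax {f : ℝ → ℝ} {t : ℝ} (hmax : IsLocalMax f t)
    (hf : ContinuousAt f t) : deriv (deriv f) t ≤ 0 := by
  by_contra! hpos
  have hmin : IsLocalMin f t := isLocalMin_of_deriv_deriv_pos hpos hmax.deriv_eq_zero hf
  have hconst : f =ᶠ[nhds t] fun _ => f t := by
    filter_upwards [hmax, hmin] with s hle hge using le_antisymm hle hge
  have hzero : deriv (deriv f) t = 0 := by
    rw [hconst.deriv.deriv_eq]
    simp
  exact hpos.ne' hzero

theorem fderiv_fderiv_nonpos_of_isLocalMax [NormedSpace ℝ E] {f : E → ℝ} {x : E}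
    (hf : ContDiffAt ℝ 2 f x) (hmax : IsLocalMax f x) (a : E) :
    fderiv ℝ (fun y => fderiv ℝ f y a) x a ≤ 0 := by
  let line : ℝ → E := fun t => x + t • a
  have hline (t : ℝ) : HasDerivAt line a t := by
    simpa [line] using ((hasDerivAt_id t).smul_const a).const_add x
  have hline_zero : line 0 = x := by simp [line]
  have htendsto : Tendsto line (nhds 0) (nhds x) := hline_zero ▸ (hline 0).continuousAt
  have hdiff : ∀ᶠ y in nhds x, DifferentiableAt ℝ f y :=
    (hf.eventually (by simp)).mono fun y hy => hy.differentiableAt (by simp)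
  have hderiv : deriv (f ∘ line) =ᶠ[nhds 0] fun t => fderiv ℝ f (line t) a := by
    filter_upwards [htendsto.eventually hdiff] with t ht
    exact (ht.hasFDerivAt.comp_hasDerivAt t (hline t)).deriv
  have hfderiv : DifferentiableAt ℝ (fun y => fderiv ℝ f y a) x :=
    ((hf.fderiv_right (m := 1) (by norm_num)).clm_apply contDiffAt_const).differentiableAt
      (by simp)
  have hderiv₂ : deriv (deriv (f ∘ line)) 0 = fderiv ℝ (fun y => fderiv ℝ f y a) x a := by
    rw [hderiv.deriv_eq]
    exact (hfderiv.hasFDerivAt.comp_hasDerivAt_of_eq 0 (hline 0) hline_zero.symm).deriv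
  rw [← hderiv₂]
  refine deriv_deriv_nonpos_of_isLocalMax ?_ ?_
  · simpa [IsLocalMax, IsMaxFilter, hline_zero] using htendsto.eventually hmax
  · exact ContinuousAt.comp_of_eq hf.continuousAt (hline 0).continuousAt hline_zero

theorem le_of_forall_not_isLocalMax {X : Type*} [TopologicalSpace X] {s U : Set X} {v : X → ℝ}
    {c : ℝ} (hs : IsCompact s) (hU : IsOpen U) (hUs : U ⊆ s) (hv : ContinuousOn v s)
    (hinterior : ∀ x ∈ U, ¬ IsLocalMax v x) (hboundary : ∀ x ∈ s \ U, v x ≤ c) :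
    ∀ x ∈ s, v x ≤ c := by
  intro x hx
  obtain ⟨z, hz, hmax⟩ := hs.exists_isMaxOn ⟨x, hx⟩ hv
  have hzU : z ∉ U := fun hzU =>
    hinterior z hzU (hmax.isLocalMax (mem_of_superset (hU.mem_nhds hzU) hUs))
  exact (hmax hx).trans (hboundary z ⟨hz, hzU⟩)

end Calculus

open scoped ComplexOrder in
theorem trace_mul_nonneg_of_posSemidef {𝕜 ι : Type*} [RCLike 𝕜] [Fintype ι] {A B : Matrix ι ι 𝕜}
    (hA : A.PosSemidef) (hB : B.PosSemidef) : 0 ≤ (A * B).trace := by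
  obtain ⟨m, a, rfl⟩ := Matrix.posSemidef_iff_eq_sum_vecMulVec.mp hA
  rw [Finset.sum_mul, Matrix.trace_sum]
  refine Finset.sum_nonneg fun r _ => ?_
  rw [Matrix.trace_mul_comm, Matrix.mul_vecMulVec, Matrix.trace_vecMulVec, dotProduct_comm]
  exact hB.dotProduct_mulVec_nonneg (a r)

section PartialDerivatives

variable {n : ℕ} {f g : (Fin n → ℝ) → ℝ} {x : Fin n → ℝ}

theorem pd_congr (h : f =ᶠ[nhds x] g) (i : Fin n) : pd n f i x = pd n g i x := by
  simp only [pd, h.fderiv_eq]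

theorem pd_add (hf : DifferentiableAt ℝ f x) (hg : DifferentiableAt ℝ g x) (i : Fin n) :
    pd n (fun y => f y + g y) i x = pd n f i x + pd n g i x := by
  simp only [pd, fderiv_fun_add hf hg, add_apply]

theorem pd_const_mul (hf : DifferentiableAt ℝ f x) (c : ℝ) (i : Fin n) :
    pd n (fun y => c * f y) i x = c * pd n f i x := by
  simp only [pd, fderiv_const_mul hf, smul_apply, smul_eq_mul]

theorem pd_sum {ι : Type*} {s : Finset ι} {F : ι → (Fin n → ℝ) → ℝ}
    (hF : ∀ m ∈ s, DifferentiableAt ℝ (F m) x) (i : Fin n) :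
    pd n (fun y => ∑ m ∈ s, F m y) i x = ∑ m ∈ s, pd n (F m) i x := by
  simp only [pd, fderiv_fun_sum hF, sum_apply]

theorem fderiv_eq_sum_pd (f : (Fin n → ℝ) → ℝ) (x a : Fin n → ℝ) :
    fderiv ℝ f x a = ∑ i, a i * pd n f i x := by
  conv_lhs => rw [pi_eq_sum_univ' a]
  simp [pd]

theorem contDiffAt_pd {m p : WithTop ℕ∞} (hf : ContDiffAt ℝ p f x) (hm : m + 1 ≤ p) (i : Fin n) :
    ContDiffAt ℝ m (pd n f i) x :=
  (hf.fderiv_right hm).clm_apply contDiffAt_const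

theorem differentiableAt_pd (hf : ContDiffAt ℝ 2 f x) (i : Fin n) :
    DifferentiableAt ℝ (pd n f i) x :=
  (contDiffAt_pd (m := 1) hf (by norm_num) i).differentiableAt (by simp)

theorem differentiableAt_hess_apply (hf : ContDiffAt ℝ 3 f x) (i j : Fin n) :
    DifferentiableAt ℝ (fun y => hess n f y i j) x :=
  differentiableAt_pd (contDiffAt_pd hf (by norm_num) j) i

theorem fderiv_pd_apply (hf : ContDiffAt ℝ 2 f x) (i : Fin n) (v : Fin n → ℝ) :
    fderiv ℝ (pd n f i) x v = fderiv ℝ (fderiv ℝ f) x v (Pi.single i 1) := by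
  have hdiff : DifferentiableAt ℝ (fderiv ℝ f) x :=
    (hf.fderiv_right (m := 1) (by norm_num)).differentiableAt (by simp)
  change fderiv ℝ (fun y => fderiv ℝ f y (Pi.single i 1)) x v = _
  simp [fderiv_clm_apply hdiff (differentiableAt_const _)]

theorem isHermitian_hess (hf : ContDiffAt ℝ 2 f x) : (hess n f x).IsHermitian := by
  ext i j
  change fderiv ℝ (pd n f i) x (Pi.single j 1) = fderiv ℝ (pd n f j) x (Pi.single i 1)
  rw [fderiv_pd_apply hf, fderiv_pd_apply hf]
  exact hf.isSymmSndFDerivAt (by simp) _ _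

theorem hess_add (hf : ContDiffAt ℝ 2 f x) (hg : ContDiffAt ℝ 2 g x) :
    hess n (fun y => f y + g y) x = hess n f x + hess n g x := by
  ext i j
  have hpd : pd n (fun y => f y + g y) j =ᶠ[nhds x] fun y => pd n f j y + pd n g j y := by
    filter_upwards [hf.eventually (by simp), hg.eventually (by simp)] with y hfy hgy
    exact pd_add (hfy.differentiableAt (by simp)) (hgy.differentiableAt (by simp)) j
  exact (pd_congr hpd i).trans (pd_add (differentiableAt_pd hf j) (differentiableAt_pd hg j) i)

theorem hess_const_mul (hf : ContDiffAt ℝ 2 f x) (c : ℝ) :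
    hess n (fun y => c * f y) x = c • hess n f x := by
  ext i j
  have hpd : pd n (fun y => c * f y) j =ᶠ[nhds x] fun y => c * pd n f j y := by
    filter_upwards [hf.eventually (by simp)] with y hfy
    exact pd_const_mul (hfy.differentiableAt (by simp)) c j
  exact (pd_congr hpd i).trans (pd_const_mul (differentiableAt_pd hf j) c i)

theorem pd_fderiv_apply (hf : ContDiffAt ℝ 2 f x) (a : Fin n → ℝ) (i : Fin n) :
    pd n (fun y => fderiv ℝ f y a) i x = (hess n f x *ᵥ a) i := by
  have hdiff (j : Fin n) := differentiableAt_pd hf j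
  simp only [fderiv_eq_sum_pd f _ a]
  rw [pd_sum fun j _ => (hdiff j).const_mul (a j)]
  exact Finset.sum_congr rfl fun j _ => (pd_const_mul (hdiff j) (a j) i).trans (mul_comm _ _)

theorem posSemidef_neg_hess_of_isLocalMax (hf : ContDiffAt ℝ 2 f x) (hmax : IsLocalMax f x) :
    (-hess n f x).PosSemidef := by
  refine .of_dotProduct_mulVec_nonneg (isHermitian_hess hf).neg fun a => ?_
  have hquad : fderiv ℝ (fun y => fderiv ℝ f y a) x a = a ⬝ᵥ hess n f x *ᵥ a := by
    rw [fderiv_eq_sum_pd]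
    exact Finset.sum_congr rfl fun i _ => by rw [pd_fderiv_apply hf]
  rw [star_trivial, Matrix.neg_mulVec, dotProduct_neg, ← hquad, neg_nonneg]
  exact fderiv_fderiv_nonpos_of_isLocalMax hf hmax a

end PartialDerivatives

section SkewSymmetric

variable {R ι : Type*} [CommRing R] [NoZeroDivisors R] [CharZero R] [Fintype ι] {A : Matrix ι ι R}

theorem trace_eq_zero_of_transpose_eq_neg (hA : Aᵀ = -A) : A.trace = 0 := by
  rw [← self_eq_neg, ← Matrix.trace_neg, ← hA, Matrix.trace_transpose]

theorem dotProduct_mulVec_self_eq_zero (hA : Aᵀ = -A) (x : ι → R) :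
    x ⬝ᵥ A *ᵥ x = 0 := by
  rw [← self_eq_neg]
  conv_lhs => rw [Matrix.dotProduct_mulVec, ← Matrix.mulVec_transpose, hA, Matrix.neg_mulVec,
    neg_dotProduct, dotProduct_comm]

end SkewSymmetric

/-- The derivative of `f` along the linear vector field `x ↦ A x`. The fields tangent to all spheres
centered at the origin are those of skew-symmetric matrices `A`. -/
def linearFieldDeriv {n : ℕ} (A : Matrix (Fin n) (Fin n) ℝ) (f : (Fin n → ℝ) → ℝ)
    (x : Fin n → ℝ) : ℝ :=
  fderiv ℝ f x (A *ᵥ x)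

/-- The generator of the rotations in the `(k, l)`-plane, with sign chosen so that its vector field
is `ξ_k ∂/∂ξ_l - ξ_l ∂/∂ξ_k`. -/
def rotationGenerator {n : ℕ} (k l : Fin n) : Matrix (Fin n) (Fin n) ℝ :=
  Matrix.single l k 1 - Matrix.single k l 1

section LinearField

variable {n : ℕ} {A : Matrix (Fin n) (Fin n) ℝ} {f : (Fin n → ℝ) → ℝ} {x : Fin n → ℝ}

theorem transpose_rotationGenerator (k l : Fin n) :
    (rotationGenerator k l)ᵀ = -rotationGenerator k l := by
  simp [rotationGenerator]

theorem linearFieldDeriv_rotationGenerator (k l : Fin n) (f : (Fin n → ℝ) → ℝ) (x : Fin n → ℝ) :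
    linearFieldDeriv (rotationGenerator k l) f x = x k * pd n f l x - x l * pd n f k x := by
  simp [linearFieldDeriv, rotationGenerator, pd, Matrix.sub_mulVec, Matrix.single_mulVec_eq]

theorem contDiffAt_linearFieldDeriv {m p : WithTop ℕ∞} (hf : ContDiffAt ℝ p f x) (hm : m + 1 ≤ p) :
    ContDiffAt ℝ m (linearFieldDeriv A f) x :=
  (hf.fderiv_right hm).clm_apply A.mulVecLin.toContinuousLinearMap.contDiff.contDiffAt

theorem pd_linearFieldDeriv (hf : ContDiffAt ℝ 2 f x) (i : Fin n) :
    pd n (linearFieldDeriv A f) i x =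
      linearFieldDeriv A (pd n f i) x + ∑ m, A m i * pd n f m x := by
  have hdiff : DifferentiableAt ℝ (fderiv ℝ f) x :=
    (hf.fderiv_right (m := 1) (by norm_num)).differentiableAt (by simp)
  have hleft : pd n (linearFieldDeriv A f) i x =
      fderiv ℝ f x (A.col i) + fderiv ℝ (fderiv ℝ f) x (Pi.single i 1) (A *ᵥ x) := by
    have h := hdiff.hasFDerivAt.clm_apply (A.mulVecLin.toContinuousLinearMap.hasFDerivAt (x := x))
    refine (congrArg (· (Pi.single i 1)) h.fderiv).trans ?_
    simp
  rw [hleft, linearFieldDeriv, fderiv_pd_apply hf, fderiv_eq_sum_pd f x (A.col i), add_comm]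
  exact congrArg (· + _) (hf.isSymmSndFDerivAt (by simp) _ _)

theorem hess_linearFieldDeriv (hf : ContDiffAt ℝ 3 f x) :
    hess n (linearFieldDeriv A f) x =
      (Matrix.of fun i j => linearFieldDeriv A (fun y => hess n f y i j) x) +
        Aᵀ * hess n f x + hess n f x * A := by
  ext i j
  have hpd_two (m : Fin n) : ContDiffAt ℝ 2 (pd n f m) x := contDiffAt_pd hf (by norm_num) m
  have hpd_diff (m : Fin n) : DifferentiableAt ℝ (fun y => A m j * pd n f m y) x :=
    ((hpd_two m).differentiableAt (by simp)).const_mul _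
  have hfield_diff : DifferentiableAt ℝ (linearFieldDeriv A (pd n f j)) x :=
    (contDiffAt_linearFieldDeriv (m := 1) (hpd_two j) (by norm_num)).differentiableAt (by simp)
  have hfirst : pd n (linearFieldDeriv A f) j =ᶠ[nhds x]
      fun y => linearFieldDeriv A (pd n f j) y + ∑ m, A m j * pd n f m y := by
    filter_upwards [hf.eventually (by simp)] with y hy
    exact pd_linearFieldDeriv (hy.of_le (by norm_num)) j
  calc pd n (pd n (linearFieldDeriv A f) j) i x
    _ = pd n (linearFieldDeriv A (pd n f j)) i x + ∑ m, A m j * pd n (pd n f m) i x := by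
      rw [pd_congr hfirst, pd_add hfield_diff (DifferentiableAt.fun_sum fun m _ => hpd_diff m),
        pd_sum fun m _ => hpd_diff m]
      simp only [pd_const_mul ((hpd_two _).differentiableAt (by simp))]
    _ = linearFieldDeriv A (pd n (pd n f j) i) x + ∑ m, A m i * pd n (pd n f j) m x +
          ∑ m, pd n (pd n f m) i x * A m j := by
      simp only [pd_linearFieldDeriv (hpd_two j), mul_comm]

theorem linearFieldDeriv_log (hf : DifferentiableAt ℝ f x) (hx : f x ≠ 0) :
    linearFieldDeriv A (fun y => Real.log (f y)) x = (f x)⁻¹ * linearFieldDeriv A f x := by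
  simp [linearFieldDeriv, fderiv.log hf hx]

theorem linearFieldDeriv_log_det_hess (hf : ContDiffAt ℝ 3 f x) (hdet : (hess n f x).det ≠ 0) :
    linearFieldDeriv A (fun y => Real.log (hess n f y).det) x =
      ((hess n f x)⁻¹ * Matrix.of fun i j =>
        linearFieldDeriv A (fun y => hess n f y i j) x).trace := by
  have hentry := differentiableAt_hess_apply hf
  rw [linearFieldDeriv_log (differentiableAt_matrix_det hentry) hdet, Matrix.inv_def,
    Ring.inverse_eq_inv', Matrix.smul_mul, Matrix.trace_smul, smul_eq_mul]
  exact congrArg _ (fderiv_matrix_det hentry _)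

theorem trace_inv_hess_mul_hess_linearFieldDeriv (hf : ContDiffAt ℝ 3 f x)
    (hdet : (hess n f x).det ≠ 0) :
    ((hess n f x)⁻¹ * hess n (linearFieldDeriv A f) x).trace =
      linearFieldDeriv A (fun y => Real.log (hess n f y).det) x + 2 * A.trace := by
  have hunit : IsUnit (hess n f x).det := isUnit_iff_ne_zero.2 hdet
  have hleft : ((hess n f x)⁻¹ * (Aᵀ * hess n f x)).trace = A.trace := by
    rw [Matrix.trace_mul_comm, Matrix.mul_nonsing_inv_cancel_right _ _ hunit,
      Matrix.trace_transpose]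
  have hright : ((hess n f x)⁻¹ * (hess n f x * A)).trace = A.trace := by
    rw [Matrix.nonsing_inv_mul_cancel_left _ _ hunit]
  rw [hess_linearFieldDeriv hf, Matrix.mul_add, Matrix.mul_add, Matrix.trace_add, Matrix.trace_add,
    hleft, hright, linearFieldDeriv_log_det_hess hf hdet]
  ring

theorem not_isLocalMax_linearFieldDeriv_add_const_mul (hf : ContDiffAt ℝ 3 f x)
    (hpos : (hess n f x).PosDef) {C : ℝ}
    (hC : 0 < linearFieldDeriv A (fun y => Real.log (hess n f y).det) x + 2 * A.trace + C * n) :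
    ¬ IsLocalMax (fun y => linearFieldDeriv A f y + C * f y) x := by
  intro hmax
  have hdet : (hess n f x).det ≠ 0 := hpos.det_pos.ne'
  have hf_two : ContDiffAt ℝ 2 f x := hf.of_le (by norm_num)
  have hfield : ContDiffAt ℝ 2 (linearFieldDeriv A f) x :=
    contDiffAt_linearFieldDeriv hf (by norm_num)
  have htrace : ((hess n f x)⁻¹ * hess n (fun y => linearFieldDeriv A f y + C * f y) x).trace =
      linearFieldDeriv A (fun y => Real.log (hess n f y).det) x + 2 * A.trace + C * n := by
    rw [hess_add hfield (contDiffAt_const.mul hf_two), hess_const_mul hf_two, Matrix.mul_add,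
      Matrix.trace_add, trace_inv_hess_mul_hess_linearFieldDeriv hf hdet, Matrix.mul_smul,
      Matrix.nonsing_inv_mul _ (isUnit_iff_ne_zero.2 hdet)]
    simp
  have hneg := trace_mul_nonneg_of_posSemidef hpos.inv.posSemidef
    (posSemidef_neg_hess_of_isLocalMax (hfield.add (contDiffAt_const.mul hf_two)) hmax)
  rw [Matrix.mul_neg, Matrix.trace_neg, htrace] at hneg
  linarith

end LinearField

section Balls

theorem isOpen_ballE (n : ℕ) (r : ℝ) : IsOpen (ballE n r) :=
  isOpen_lt (by fun_prop) continuous_const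

theorem ballE_subset_cballE (n : ℕ) (r : ℝ) : ballE n r ⊆ cballE n r :=
  fun _ => le_of_lt (α := ℝ)

theorem isCompact_cballE (n : ℕ) (r : ℝ) : IsCompact (cballE n r) := by
  refine Metric.isCompact_of_isClosed_isBounded (isClosed_le (by fun_prop) continuous_const) ?_
  refine (Metric.isBounded_closedBall (x := (0 : Fin n → ℝ)) (r := |r|)).subset fun ξ hξ => ?_
  rw [mem_closedBall_zero_iff, pi_norm_le_iff_of_nonneg (abs_nonneg r)]
  intro i
  have hcoord : ξ i ^ 2 ≤ ∑ j, ξ j ^ 2 :=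
    Finset.single_le_sum (f := fun j => ξ j ^ 2) (fun j _ => sq_nonneg _) (Finset.mem_univ i)
  exact sq_le_sq.1 (hcoord.trans hξ)

end Balls

section RotationField

variable {n : ℕ} {A : Matrix (Fin n) (Fin n) ℝ} {f : (Fin n → ℝ) → ℝ} {x : Fin n → ℝ}

theorem hasStrictFDerivAt_sum_sq (x : Fin n → ℝ) :
    HasStrictFDerivAt (fun y : Fin n → ℝ => ∑ i, y i ^ 2)
      (∑ i, (2 * x i) • ContinuousLinearMap.proj (R := ℝ) (φ := fun _ : Fin n => ℝ) i) x := by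
  refine HasStrictFDerivAt.fun_sum fun i _ => ?_
  simpa using (ContinuousLinearMap.proj (R := ℝ) (φ := fun _ : Fin n => ℝ) i).hasStrictFDerivAt
    (x := x).pow 2

/-- A function that is constant on a sphere is extremal on it at every point, so its differential is
a Lagrange multiple of that of `|y|²`, which annihilates `A x`. -/
theorem linearFieldDeriv_eq_zero_of_const_on_sphere (hA : Aᵀ = -A)
    (hf : ContDiffAt ℝ 1 f x) (hconst : ∀ y, ∑ i, y i ^ 2 = ∑ i, x i ^ 2 → f y = f x) :
    linearFieldDeriv A f x = 0 := by
  rcases eq_or_ne x 0 with rfl | hx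
  · simp [linearFieldDeriv]
  have hextr : IsLocalExtrOn f {y | ∑ i, y i ^ 2 = ∑ i, x i ^ 2} x :=
    .inl (eventually_mem_nhdsWithin.mono fun y hy => (hconst y hy).ge)
  obtain ⟨a, b, hab, hzero⟩ := hextr.exists_multipliers_of_hasStrictFDerivAt_1d
    (hasStrictFDerivAt_sum_sq x) (hf.hasStrictFDerivAt (by simp))
  have happly (v : Fin n → ℝ) : a * (2 * (x ⬝ᵥ v)) + b * fderiv ℝ f x v = 0 := by
    simpa [dotProduct, Finset.mul_sum, mul_assoc] using congrArg (· v) hzero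
  have hb : b ≠ 0 := by
    rintro rfl
    have ha : a ≠ 0 := by simpa using hab
    simpa [ha, hx] using happly x
  simpa [linearFieldDeriv, dotProduct_mulVec_self_eq_zero hA, hb] using happly (A *ᵥ x)

theorem linearFieldDeriv_log_of_eq_inv_mul_rpow {D K : (Fin n → ℝ) → ℝ} {p : ℝ}
    (hA : Aᵀ = -A) (hx : x ∈ ballE n 1) (hD : DifferentiableAt ℝ D x)
    (hD_ne : ∀ ξ ∈ ballE n 1, D ξ ≠ 0)
    (hK : ∀ ξ ∈ ballE n 1, D ξ = (K ξ)⁻¹ * (1 - ∑ i, ξ i ^ 2) ^ p) :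
    linearFieldDeriv A (fun ξ => Real.log (K ξ)) x =
      -linearFieldDeriv A (fun ξ => Real.log (D ξ)) x := by
  let w : (Fin n → ℝ) → ℝ := fun ξ => p * Real.log (1 - ∑ i, ξ i ^ 2)
  have hone_sub_pos : ∀ ξ ∈ ballE n 1, 0 < 1 - ∑ i, ξ i ^ 2 := fun ξ hξ =>
    sub_pos.2 (hξ.trans_eq (one_pow 2))
  have hlog : (fun ξ => Real.log (K ξ)) =ᶠ[nhds x] fun ξ => w ξ - Real.log (D ξ) := by
    filter_upwards [(isOpen_ballE n 1).mem_nhds hx] with ξ hξ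
    have hK_inv_ne : (K ξ)⁻¹ ≠ 0 := left_ne_zero_of_mul (hK ξ hξ ▸ hD_ne ξ hξ)
    have hpow_ne := (Real.rpow_pos_of_pos (hone_sub_pos ξ hξ) p).ne'
    rw [hK ξ hξ, Real.log_mul hK_inv_ne hpow_ne, Real.log_rpow (hone_sub_pos ξ hξ), Real.log_inv]
    ring
  have hw : ContDiffAt ℝ 1 w x :=
    contDiffAt_const.mul (ContDiffAt.log (by fun_prop) (hone_sub_pos x hx).ne')
  have hw_zero : linearFieldDeriv A w x = 0 :=
    linearFieldDeriv_eq_zero_of_const_on_sphere hA hw fun y hy => by simp only [w, hy]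
  have hsub : linearFieldDeriv A (fun ξ => Real.log (K ξ)) x =
      linearFieldDeriv A w x - linearFieldDeriv A (fun ξ => Real.log (D ξ)) x := by
    rw [linearFieldDeriv, hlog.fderiv_eq,
      fderiv_fun_sub (hw.differentiableAt (by simp)) (hD.log (hD_ne x hx))]
    rfl
  rw [hsub, hw_zero, zero_sub]

theorem linearFieldDeriv_add_const_mul_nonpos (hA : Aᵀ = -A)
    (hf : ∀ ξ ∈ cballE n 1, ContDiffAt ℝ 3 f ξ) (hpos : ∀ ξ ∈ ballE n 1, (hess n f ξ).PosDef)
    (hbd : ∀ ξ ∈ sphereE n 1, f ξ = 0) {C : ℝ}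
    (hC : ∀ ξ ∈ ballE n 1,
      0 < linearFieldDeriv A (fun y => Real.log (hess n f y).det) ξ + C * n) :
    ∀ ξ ∈ cballE n 1, linearFieldDeriv A f ξ + C * f ξ ≤ 0 := by
  refine le_of_forall_not_isLocalMax (isCompact_cballE n 1) (isOpen_ballE n 1)
    (ballE_subset_cballE n 1) ?continuous ?interior ?boundary
  case continuous =>
    refine fun ξ hξ => ContinuousAt.continuousWithinAt ?_
    exact (contDiffAt_linearFieldDeriv (m := 2) (hf ξ hξ) (by norm_num)).continuousAt.add
      (continuousAt_const.mul (hf ξ hξ).continuousAt)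
  case interior =>
    intro ξ hξ
    apply not_isLocalMax_linearFieldDeriv_add_const_mul (hf ξ (ballE_subset_cballE n 1 hξ))
      (hpos ξ hξ)
    simpa [trace_eq_zero_of_transpose_eq_neg hA] using hC ξ hξ
  case boundary =>
    rintro ξ ⟨hξ, hξ_not_ball⟩
    have hsphere : ξ ∈ sphereE n 1 := le_antisymm hξ (not_lt.1 hξ_not_ball)
    have hfield : linearFieldDeriv A f ξ = 0 :=
      linearFieldDeriv_eq_zero_of_const_on_sphere hA ((hf ξ hξ).of_le (by norm_num)) fun y hy => by
        rw [hbd ξ hsphere, hbd y (hy.trans hsphere)]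
    simp [hfield, hbd ξ hsphere]

end RotationField

theorem statement14_general {n : ℕ} (hn : n ≠ 0) {u : (Fin n → ℝ) → ℝ}
    (hu : ∀ ξ ∈ cballE n 1, ContDiffAt ℝ 3 u ξ) (hpd : ∀ ξ ∈ ballE n 1, (hess n u ξ).PosDef)
    (hbd : ∀ ξ ∈ sphereE n 1, u ξ = 0)
    {A : Matrix (Fin n) (Fin n) ℝ} (hA : Aᵀ = -A) {K : (Fin n → ℝ) → ℝ} {p : ℝ}
    (hK : ∀ ξ ∈ ballE n 1, (hess n u ξ).det = (K ξ)⁻¹ * (1 - ∑ i, ξ i ^ 2) ^ p)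
    {C₁ : ℝ} (hang : ∀ ξ ∈ ballE n 1, linearFieldDeriv A (fun η => Real.log (K η)) ξ ≤ n * C₁) :
    ∀ ξ ∈ cballE n 1, linearFieldDeriv A u ξ ≤ -C₁ * u ξ := by
  have hlog_det : ∀ ξ ∈ ballE n 1,
      -(n * C₁) ≤ linearFieldDeriv A (fun y => Real.log (hess n u y).det) ξ := by
    intro ξ hξ
    have hentry := differentiableAt_hess_apply (hu ξ (ballE_subset_cballE n 1 hξ))
    rw [neg_le, ← linearFieldDeriv_log_of_eq_inv_mul_rpow hA hξ (differentiableAt_matrix_det hentry)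
      (fun η hη => (hpd η hη).det_pos.ne') hK]
    exact hang ξ hξ
  have hstrict : ∀ C ∈ Ioi C₁, ∀ ξ ∈ cballE n 1, linearFieldDeriv A u ξ + C * u ξ ≤ 0 := by
    intro C hC
    refine linearFieldDeriv_add_const_mul_nonpos hA hu hpd hbd fun ξ hξ => ?_
    have hgap : C₁ * n < C * n := mul_lt_mul_of_pos_right hC (by positivity)
    linarith [hlog_det ξ hξ]
  intro ξ hξ
  have hlimit : linearFieldDeriv A u ξ + C₁ * u ξ ≤ 0 :=
    le_on_closure (s := Ioi C₁) (fun C hC => hstrict C hC ξ hξ) (by fun_prop) (by fun_prop)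
      (closure_Ioi C₁ ▸ self_mem_Ici)
  linarith

/-- Angular-derivative bound for the Legendre transform of the initial
data: if `det D²u = K⁻¹ (1−|ξ|²)^{−(n+2)/2}` and the angular derivative of `log K` is at
most `n C₁` in `B₁`, then `∂u ≤ −C₁ u` on `B̄₁`, where `∂ = ξ_k ∂/∂ξ_l − ξ_l ∂/∂ξ_k`. -/
theorem statement14 (n : ℕ) (hn : 2 ≤ n)
    (S : Set (Fin n → ℝ)) (hS : IsOpen S) (hsub : cballE n 1 ⊆ S)
    (u : (Fin n → ℝ) → ℝ) (hu : ContDiffOn ℝ 3 u S)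
    (hpd : ∀ ξ ∈ S, (hess n u ξ).PosDef)
    (hbd : ∀ ξ ∈ sphereE n 1, u ξ = 0)
    (k l : Fin n) (hkl : k ≠ l)
    (K : (Fin n → ℝ) → ℝ) (hKpos : ∀ ξ ∈ ballE n 1, 0 < K ξ)
    (hK : ∀ ξ ∈ ballE n 1,
      (hess n u ξ).det = (K ξ)⁻¹ * (1 - ∑ i, (ξ i) ^ 2) ^ (-((n : ℝ) + 2) / 2))
    (C₁ : ℝ) (hC₁ : 0 < C₁)
    (hang : ∀ ξ ∈ ballE n 1,
      ξ k * pd n (fun η => Real.log (K η)) l ξ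
        - ξ l * pd n (fun η => Real.log (K η)) k ξ ≤ n * C₁) :
    ∀ ξ ∈ cballE n 1, ξ k * pd n u l ξ - ξ l * pd n u k ξ ≤ -C₁ * u ξ := by
  simp only [← linearFieldDeriv_rotationGenerator] at hang ⊢
  exact statement14_general (by omega) (fun ξ hξ => hu.contDiffAt (hS.mem_nhds (hsub hξ)))
    (fun ξ hξ => hpd ξ (hsub (ballE_subset_cballE n 1 hξ))) hbd (transpose_rotationGenerator k l)
    hK hang

end
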